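/- (Klingenberg Lemma.) Let X be a proper geodesic metric space and p ∈ X. If q is a point in the closure of Cut(p) with inj(p) = dist(p,q) > 0, then either q is conjugate to p along some geodesic from p to q, or there exists a local geodesic γ : [0,1] → X with γ(0) = γ(1) = p, length L(γ) = 2·inj(p), and midpoint γ(1/2) = q. -/

import Mathlib

open Set Metric Topology Filter
open scoped ENNReal

noncomputable section

namespace InjSoul

/-- The unit interval `[0,1] ⊆ ℝ`. -/
abbrev I01 : Set ℝ := Set.Icc (0 : ℝ) 1

variable {X : Type*} [MetricSpace X]

/-- `0` as a point of `[0,1]`. -/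
def pt0 : I01 := ⟨0, by norm_num⟩

/-- `1` as a point of `[0,1]`. -/
def pt1 : I01 := ⟨1, by norm_num⟩

/-- `c : [0,1] → X` is a geodesic of speed (= length) `L`. -/
def IsGeod (c : C(I01, X)) (L : ℝ) : Prop :=
  0 ≤ L ∧ ∀ s t : I01, dist (c s) (c t) = L * |(s : ℝ) - (t : ℝ)|

/-- `γ : [0,1] → X` is a local geodesic of speed (= length) `L`. -/
def IsLocGeod (γ : C(I01, X)) (L : ℝ) : Prop :=
  0 ≤ L ∧ ∀ t : I01, ∃ ε > 0, ∀ s s' : I01,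
    |(s : ℝ) - (t : ℝ)| < ε → |(s' : ℝ) - (t : ℝ)| < ε →
      dist (γ s) (γ s') = L * |(s : ℝ) - (s' : ℝ)|

/-- `X` is a geodesic space: any two points are joined by a geodesic. -/
def GeodesicSpace (X : Type*) [MetricSpace X] : Prop :=
  ∀ x y : X, ∃ (c : C(I01, X)) (L : ℝ), IsGeod c L ∧ c pt0 = x ∧ c pt1 = y

/-- The cut locus of `p`: all points joined to `p` by at least two distinct geodesics. -/
def Cut (p : X) : Set X :=
  {q | ∃ (γ σ : C(I01, X)) (Lγ Lσ : ℝ), IsGeod γ Lγ ∧ IsGeod σ Lσ ∧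
    γ pt0 = p ∧ γ pt1 = q ∧ σ pt0 = p ∧ σ pt1 = q ∧ γ ≠ σ}

/-- The injectivity radius of `p`, an element of `[0,∞]` (`∞` if `Cut p = ∅`). -/
def inj (p : X) : ℝ≥0∞ := ⨅ q ∈ Cut p, edist p q

/-- The minimal cut locus of `p`: points `γ t₀`, `t₀ ∈ (0,1)`, on a nontrivial local geodesic
`γ` issuing in `p` such that `γ` is minimizing on `[0,t₀]` but on no larger interval `[0,t]`. -/
def MinCut (p : X) : Set X :=
  {q | ∃ (γ : C(I01, X)) (L : ℝ) (t₀ : ℝ) (ht₀ : t₀ ∈ Set.Ioo (0 : ℝ) 1),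
      IsLocGeod γ L ∧ 0 < L ∧ γ pt0 = p ∧ γ ⟨t₀, Set.mem_Icc_of_Ioo ht₀⟩ = q ∧
      dist p q = L * t₀ ∧
      ∀ t : ℝ, ∀ ht : t ∈ Set.Ioc t₀ 1,
        dist p (γ ⟨t, ⟨(ht₀.1.trans ht.1).le, ht.2⟩⟩) ≠ L * t}

/-- The minimal radius of `p`, an element of `[0,∞]` (`∞` if `MinCut p = ∅`). -/
def minRad (p : X) : ℝ≥0∞ := ⨅ q ∈ MinCut p, edist p q

/-- The space `X̃_p` of local geodesics issuing in `p` (including the constant map), viewed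
as a subset of the continuous maps `C([0,1], X)` whose metric is the uniform metric `ρ`. -/
def LocGeodFrom (p : X) : Set C(I01, X) := {γ | (∃ L, IsLocGeod γ L) ∧ γ pt0 = p}

/-- The endpoint map `exp_p : X̃_p → X`, `γ ↦ γ 1`. -/
def endpt : C(I01, X) → X := fun γ => γ pt1

/-- `γ 1` is conjugate to `p = γ 0` along the local geodesic `γ`: no neighborhood `U` of `γ`
in `X̃_p` is mapped homeomorphically onto its image by the endpoint map. -/
def ConjugateAlong (p : X) (γ : C(I01, X)) : Prop :=
  γ ∈ LocGeodFrom p ∧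
    ¬ ∃ U : Set C(I01, X), U ⊆ LocGeodFrom p ∧ U ∈ 𝓝[LocGeodFrom p] γ ∧
      Topology.IsEmbedding (U.restrict endpt)

/-- The conjugate radius of `p`: the infimum of lengths of local geodesics issuing in `p`
along which the endpoint is conjugate to `p` (`∞` if there are none). -/
def conjRad (p : X) : ℝ≥0∞ :=
  sInf {l | ∃ (γ : C(I01, X)) (L : ℝ), IsLocGeod γ L ∧ γ pt0 = p ∧
    ConjugateAlong p γ ∧ l = ENNReal.ofReal L}

/-- The conjugate radius of the space `X`. -/
def conjSpace (X : Type*) [MetricSpace X] : ℝ≥0∞ := ⨅ p : X, conjRad p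


/-!
In a proper space, Arzelà–Ascoli makes the endpoint map closed on the minimizing geodesics issuing
in `p`. Suppose `q` is not conjugate to `p` along the geodesic `γ`, so that the endpoint map is
injective near `γ`. If `γ` were the only geodesic from `p` to `q`, then by closedness all geodesics
from `p` to points near `q` would be near `γ`, hence unique, and `q` would not be a limit of cut
points. So there is a second geodesic `σ` from `p` to `q`.

If `γ` followed by the reverse of `σ` is not a local geodesic, then there are points `γ a`, `σ b`
arbitrarily close to `q` joined by a geodesic `m` which is a short cut. By the triangle inequality
`m` stays in the ball of radius `inj p` about `p`, where geodesics from `p` are unique. Closedness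
then lifts `m` to a connected set of geodesics from `p`, containing the initial parts of `γ` up
to `γ a` and of `σ` up to `σ b`. This set meets every small sphere about `γ`. Letting `a` and `b`
tend to `1`, closedness yields geodesics from `p` to `q` other than `γ` but arbitrarily close to
it, contradicting injectivity.
-/

open scoped NNReal

/-- The space of (minimizing) geodesics issuing in `p`, as a subset of `LocGeodFrom p`. The length
is not recorded, since it is determined by the endpoints. -/
def GeodFrom (p : X) : Set C(I01, X) := {c | (∃ L, IsGeod c L) ∧ c pt0 = p}

section Geodesics

variable {p : X} {c : C(I01, X)} {L : ℝ}

lemma IsGeod.length_eq (hc : IsGeod c L) : L = dist (c pt0) (c pt1) := by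
  simp [hc.2, pt0, pt1]

lemma IsGeod.dist_pt0_apply (hc : IsGeod c L) (t : I01) : dist (c pt0) (c t) = L * t := by
  simp [hc.2, pt0, abs_of_nonneg t.2.1]

lemma IsGeod.dist_apply_pt1 (hc : IsGeod c L) (t : I01) : dist (c t) (c pt1) = L * (1 - t) := by
  rw [hc.2, abs_sub_comm, pt1, abs_of_nonneg (sub_nonneg.2 t.2.2)]

lemma IsGeod.isLocGeod (hc : IsGeod c L) : IsLocGeod c L :=
  ⟨hc.1, fun _ => ⟨1, one_pos, fun s s' _ _ => hc.2 s s'⟩⟩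

lemma IsGeod.lipschitzWith (hc : IsGeod c L) : LipschitzWith L.toNNReal c :=
  .of_dist_le_mul fun s t => by
    rw [Real.coe_toNNReal L hc.1, Subtype.dist_eq, Real.dist_eq]
    exact (hc.2 s t).le

lemma exists_isGeod_iff :
    (∃ L, IsGeod c L) ↔
      ∀ s t : I01, dist (c s) (c t) = dist (c pt0) (c pt1) * |(s : ℝ) - (t : ℝ)| :=
  ⟨fun ⟨_, hc⟩ => hc.length_eq ▸ hc.2, fun hc => ⟨_, dist_nonneg, hc⟩⟩

lemma isGeod_of_mem_geodFrom (hc : c ∈ GeodFrom p) : IsGeod c (dist p (endpt c)) := by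
  obtain ⟨⟨L, hL⟩, rfl⟩ := hc
  exact hL.length_eq ▸ hL

lemma geodFrom_subset_locGeodFrom (p : X) : GeodFrom p ⊆ LocGeodFrom p :=
  fun _ ⟨⟨L, hL⟩, h0⟩ => ⟨⟨L, hL.isLocGeod⟩, h0⟩

lemma mem_cut_iff {q : X} :
    q ∈ Cut p ↔ ∃ γ ∈ GeodFrom p, ∃ σ ∈ GeodFrom p, endpt γ = q ∧ endpt σ = q ∧ γ ≠ σ :=
  ⟨fun ⟨γ, σ, Lγ, Lσ, hγ, hσ, hγ0, hγ1, hσ0, hσ1, hne⟩ =>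
    ⟨γ, ⟨⟨Lγ, hγ⟩, hγ0⟩, σ, ⟨⟨Lσ, hσ⟩, hσ0⟩, hγ1, hσ1, hne⟩,
  fun ⟨γ, ⟨⟨Lγ, hγ⟩, hγ0⟩, σ, ⟨⟨Lσ, hσ⟩, hσ0⟩, hγ1, hσ1, hne⟩ =>
    ⟨γ, σ, Lγ, Lσ, hγ, hσ, hγ0, hγ1, hσ0, hσ1, hne⟩⟩

lemma disjoint_ball_cut {r : ℝ} (hr : ENNReal.ofReal r ≤ inj p) :
    Disjoint (ball p r) (Cut p) := by
  refine disjoint_left.2 fun x hx hcut => ?_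
  have hlt : edist p x < ENNReal.ofReal r := by
    rwa [edist_comm, edist_lt_ofReal]
  exact hlt.not_ge (hr.trans (iInf₂_le x hcut))

lemma IsGeod.dist_lt_of_perimeter_lt {r : ℝ} (hc : IsGeod c L)
    (hr : dist p (c pt0) + dist (c pt0) (c pt1) + dist (c pt1) p < 2 * r) (t : I01) :
    dist p (c t) < r := by
  have hleft := dist_triangle p (c pt0) (c t)
  have hright := dist_triangle (c t) (c pt1) p
  rw [hc.dist_pt0_apply] at hleft
  rw [hc.dist_apply_pt1, dist_comm] at hright
  rw [← hc.length_eq] at hr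
  linarith

end Geodesics

section Compactness

lemma isCompact_setOfPred_lipschitzWith_forall_mem {A Y : Type*} [PseudoEMetricSpace A]
    [PseudoEMetricSpace Y] (K : ℝ≥0) {s : Set Y} (hs : IsCompact s) :
    IsCompact {f : C(A, Y) | LipschitzWith K f ∧ ∀ a, f a ∈ s} := by
  apply ArzelaAscoli.isCompact_of_equicontinuous
  · convert (isCompact_univ_pi fun _ : A => hs).inter_left (isClosed_setOfPred_lipschitzWith K)
    ext f
    constructor
    · rintro ⟨g, ⟨hg, hgs⟩, rfl⟩
      exact ⟨hg, fun a _ => hgs a⟩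
    · rintro ⟨hf, hfs⟩
      exact ⟨⟨f, hf.continuous⟩, ⟨hf, fun a => hfs a trivial⟩, rfl⟩
  · exact (LipschitzWith.uniformEquicontinuous _ K fun f => f.2.1).equicontinuous

lemma continuous_endpt : Continuous (endpt : C(I01, X) → X) :=
  continuous_eval_const _

lemma isClosed_geodFrom (p : X) : IsClosed (GeodFrom p) := by
  have heval (t : I01) : Continuous fun c : C(I01, X) => c t := continuous_eval_const t
  simp only [GeodFrom, exists_isGeod_iff]
  refine .and ?_ (isClosed_eq (heval _) continuous_const)
  simp only [ofPred_forall]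
  exact isClosed_iInter fun s => isClosed_iInter fun t =>
    isClosed_eq ((heval s).dist (heval t)) (((heval _).dist (heval _)).mul continuous_const)

variable [ProperSpace X]

lemma isCompact_geodFrom_inter_preimage (p : X) {K : Set X} (hK : IsCompact K) :
    IsCompact (GeodFrom p ∩ endpt ⁻¹' K) := by
  obtain ⟨R, hR⟩ := hK.isBounded.subset_closedBall p
  have hcompact :=
    isCompact_setOfPred_lipschitzWith_forall_mem (A := I01) R.toNNReal (isCompact_closedBall p R)
  refine hcompact.of_isClosed_subset
    ((isClosed_geodFrom p).inter (hK.isClosed.preimage continuous_endpt)) ?_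
  rintro c ⟨hc, hcK⟩
  have hgeod := isGeod_of_mem_geodFrom hc
  have hlen : dist p (endpt c) ≤ R := by simpa [dist_comm] using hR hcK
  refine ⟨hgeod.lipschitzWith.weaken (Real.toNNReal_le_toNNReal hlen), fun t => ?_⟩
  have ht := hgeod.dist_pt0_apply t
  rw [hc.2] at ht
  rw [mem_closedBall', ht]
  exact (mul_le_of_le_one_right dist_nonneg t.2.2).trans hlen

lemma isClosedMap_domRestrict_endpt (p : X) : IsClosedMap ((GeodFrom p).domRestrict endpt) := by
  refine (isProperMap_iff_isCompact_preimage.2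
    ⟨continuous_endpt.comp continuous_subtype_val, fun K hK => ?_⟩).isClosedMap
  rw [Subtype.isCompact_iff, preimage_comp, Subtype.image_preimage_coe]
  exact isCompact_geodFrom_inter_preimage p hK

lemma isClosed_image_endpt (p : X) {A : Set C(I01, X)} (hA : IsClosed A) :
    IsClosed (endpt '' (GeodFrom p ∩ A)) := by
  have h := isClosedMap_domRestrict_endpt p _ (hA.preimage continuous_subtype_val)
  rwa [image_domRestrict, inter_comm] at h

end Compactness

section Conjugate

variable {p q : X} {γ σ : C(I01, X)}

lemma exists_ball_injOn_of_not_conjugateAlong (hγ : γ ∈ LocGeodFrom p)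
    (hconj : ¬ ConjugateAlong p γ) : ∃ δ > 0, InjOn endpt (ball γ δ ∩ LocGeodFrom p) := by
  simp only [ConjugateAlong, hγ, true_and, not_not] at hconj
  obtain ⟨U, -, hU, hemb⟩ := hconj
  obtain ⟨δ, hδ, hsub⟩ := Metric.mem_nhdsWithin_iff.1 hU
  exact ⟨δ, hδ, (injOn_iff_injective.2 hemb.injective).mono hsub⟩

theorem conjugateAlong_of_mem_closure_cut_of_notMem_cut [ProperSpace X] (hq : q ∈ closure (Cut p))
    (hqcut : q ∉ Cut p) (hγ : γ ∈ GeodFrom p) (hγq : endpt γ = q) : ConjugateAlong p γ := by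
  by_contra hconj
  obtain ⟨δ, hδ, hinj⟩ :=
    exists_ball_injOn_of_not_conjugateAlong (geodFrom_subset_locGeodFrom p hγ) hconj
  set F := endpt '' (GeodFrom p ∩ (ball γ δ)ᶜ)
  have hF : IsClosed F := isClosed_image_endpt p isOpen_ball.isClosed_compl
  have hqF : q ∉ F := by
    rintro ⟨c, ⟨hc, hcδ⟩, hcq⟩
    refine hqcut (mem_cut_iff.2 ⟨c, hc, γ, hγ, hcq, hγq, ?_⟩)
    rintro rfl
    exact hcδ (mem_ball_self hδ)
  obtain ⟨x, hxF, hxcut⟩ := mem_closure_iff.1 hq Fᶜ hF.isOpen_compl hqF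
  obtain ⟨c, hc, d, hd, hcx, hdx, hcd⟩ := mem_cut_iff.1 hxcut
  have hmem {e} (he : e ∈ GeodFrom p) (hex : endpt e = x) : e ∈ ball γ δ ∩ LocGeodFrom p :=
    ⟨by_contra fun hball => hxF ⟨e, ⟨he, hball⟩, hex⟩, geodFrom_subset_locGeodFrom p he⟩
  exact hcd (hinj (hmem hc hcx) (hmem hd hdx) (hcx.trans hdx.symm))

end Conjugate

section Lifting

lemma isPreconnected_preimage_of_isClosedMap {A B : Type*} [TopologicalSpace A]
    [TopologicalSpace B] {f : A → B} {s : Set B} (hs : IsPreconnected s)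
    (hinj : InjOn f (f ⁻¹' s)) (hf : IsClosedMap f) (hsf : s ⊆ range f) :
    IsPreconnected (f ⁻¹' s) := by
  have : PreconnectedSpace s := isPreconnected_iff_preconnectedSpace.1 hs
  have huniv : IsPreconnected (s.restrictPreimage f ⁻¹' univ) :=
    isPreconnected_univ.preimage_of_isClosedMap
      (fun a b hab => Subtype.ext (hinj a.2 b.2 (congrArg Subtype.val hab)))
      (hf.restrictPreimage s) (by simp [range_restrictPreimage, hsf])
  have himage := huniv.image Subtype.val continuous_subtype_val.continuousOn
  rwa [preimage_univ, image_univ, Subtype.range_coe] at himage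

lemma isPreconnected_geodFrom_inter_preimage [ProperSpace X] (hgeo : GeodesicSpace X) {p : X}
    {M : Set X} (hM : IsPreconnected M) (hcut : Disjoint M (Cut p)) :
    IsPreconnected (GeodFrom p ∩ endpt ⁻¹' M) := by
  have hlift : IsPreconnected ((GeodFrom p).domRestrict endpt ⁻¹' M) := by
    refine isPreconnected_preimage_of_isClosedMap hM ?_ (isClosedMap_domRestrict_endpt p) ?_
    · intro c hc d _ hcd
      by_contra hne
      exact disjoint_left.1 hcut hc (mem_cut_iff.2
        ⟨c, c.2, d, d.2, rfl, hcd.symm, Subtype.coe_ne_coe.2 hne⟩)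
    · intro x _
      obtain ⟨c, L, hc, hc0, hc1⟩ := hgeo p x
      exact ⟨⟨c, ⟨L, hc⟩, hc0⟩, hc1⟩
  have himage := hlift.image Subtype.val continuous_subtype_val.continuousOn
  rwa [domRestrict_eq, preimage_comp, Subtype.image_preimage_coe] at himage

/-- The initial part of `c` up to time `a`, reparametrized on `[0,1]`, as a continuous function
of `a`. -/
def initPart (c : C(I01, X)) : C(I01, C(I01, X)) :=
  (c.comp ⟨fun z : I01 × I01 => ⟨z.1 * z.2, unitInterval.mul_mem z.1.2 z.2.2⟩, by fun_prop⟩).curry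

variable {p : X} {c : C(I01, X)}

lemma initPart_pt1 (c : C(I01, X)) : initPart c pt1 = c := by
  ext t
  simp [initPart, pt1]

lemma endpt_initPart (c : C(I01, X)) (a : I01) : endpt (initPart c a) = c a := by
  simp [initPart, endpt, pt1]

lemma tendsto_initPart (c : C(I01, X)) : Tendsto (initPart c) (𝓝 pt1) (𝓝 c) := by
  simpa only [initPart_pt1] using (initPart c).continuous.tendsto pt1

lemma IsGeod.initPart {L : ℝ} (hc : IsGeod c L) (a : I01) : IsGeod (initPart c a) (L * a) := by
  refine ⟨mul_nonneg hc.1 a.2.1, fun s t => (hc.2 _ _).trans ?_⟩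
  change L * |(a : ℝ) * s - a * t| = _
  rw [← mul_sub, abs_mul, abs_of_nonneg a.2.1, mul_assoc]

lemma initPart_mem_geodFrom (hc : c ∈ GeodFrom p) (a : I01) : initPart c a ∈ GeodFrom p := by
  obtain ⟨⟨L, hL⟩, rfl⟩ := hc
  exact ⟨⟨_, hL.initPart a⟩, by simp [initPart, pt0]⟩

end Lifting

section Concatenation

lemma trans_half {Y : Type*} [TopologicalSpace Y] {x y z : Y} (γ : Path x y)
    (τ : Path y z) : γ.trans τ ⟨1 / 2, by norm_num⟩ = y := by
  simp [Path.trans_apply]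

lemma trans_symm_apply {Y : Type*} [TopologicalSpace Y] {x y z : Y} (γ : Path x y)
    (σ : Path z y) (t : I01) : γ.trans σ.symm t = σ.trans γ.symm (unitInterval.symm t) := by
  have h := Path.trans_symm σ γ.symm
  rw [Path.symm_symm] at h
  rw [← h]
  rfl

variable {x y z : X} {L : ℝ} {γ : Path x y} {σ : Path z y}

lemma dist_trans_of_le_half (hγ : IsGeod (γ : C(I01, X)) L) (τ : Path y z) {s t : I01}
    (hs : (s : ℝ) ≤ 1 / 2) (ht : (t : ℝ) ≤ 1 / 2) :
    dist (γ.trans τ s) (γ.trans τ t) = 2 * L * |(s : ℝ) - t| := by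
  rw [Path.trans_apply, Path.trans_apply, dif_pos hs, dif_pos ht]
  refine (hγ.2 _ _).trans ?_
  simp only [← mul_sub, abs_mul, abs_two]
  ring

lemma dist_trans_symm_of_half_le (hσ : IsGeod (σ : C(I01, X)) L) (γ : Path x y) {s t : I01}
    (hs : 1 / 2 ≤ (s : ℝ)) (ht : 1 / 2 ≤ (t : ℝ)) :
    dist (γ.trans σ.symm s) (γ.trans σ.symm t) = 2 * L * |(s : ℝ) - t| := by
  have hsymm {u : I01} (hu : 1 / 2 ≤ (u : ℝ)) : (unitInterval.symm u : ℝ) ≤ 1 / 2 := by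
    rw [unitInterval.coe_symm_eq]
    linarith
  rw [trans_symm_apply γ σ s, trans_symm_apply γ σ t,
    dist_trans_of_le_half hσ _ (hsymm hs) (hsymm ht), unitInterval.coe_symm_eq,
    unitInterval.coe_symm_eq, sub_sub_sub_cancel_left, abs_sub_comm]

lemma dist_trans_symm_le_of_le_half_of_half_le (hγ : IsGeod (γ : C(I01, X)) L)
    (hσ : IsGeod (σ : C(I01, X)) L) {s t : I01} (hs : (s : ℝ) ≤ 1 / 2) (ht : 1 / 2 ≤ (t : ℝ)) :
    dist (γ.trans σ.symm s) (γ.trans σ.symm t) ≤ 2 * L * |(s : ℝ) - t| := by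
  let half : I01 := ⟨1 / 2, by norm_num⟩
  calc dist (γ.trans σ.symm s) (γ.trans σ.symm t)
      ≤ dist (γ.trans σ.symm s) (γ.trans σ.symm half) +
          dist (γ.trans σ.symm half) (γ.trans σ.symm t) := dist_triangle _ _ _
    _ = 2 * L * |(s : ℝ) - 1 / 2| + 2 * L * |1 / 2 - (t : ℝ)| := by
      rw [dist_trans_of_le_half hγ _ hs le_rfl, dist_trans_symm_of_half_le hσ _ le_rfl ht]
    _ = 2 * L * |(s : ℝ) - t| := by
      rw [abs_of_nonpos (sub_nonpos.2 hs), abs_of_nonpos (sub_nonpos.2 ht),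
        abs_of_nonpos (sub_nonpos.2 (hs.trans ht))]
      ring

lemma exists_le_dist_trans_symm
    (hmid : ∀ᶠ u : I01 × I01 in 𝓝 (pt1, pt1),
      L * (1 - u.1) + L * (1 - u.2) ≤ dist (γ u.1) (σ u.2)) :
    ∃ ε > 0, ∀ s t : I01, (s : ℝ) ≤ 1 / 2 → 1 / 2 ≤ (t : ℝ) →
      |(s : ℝ) - 1 / 2| < ε → |(t : ℝ) - 1 / 2| < ε →
        2 * L * |(s : ℝ) - t| ≤ dist (γ.trans σ.symm s) (γ.trans σ.symm t) := by
  obtain ⟨ε, hε, hmid⟩ := Metric.eventually_nhds_iff.1 hmid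
  refine ⟨ε / 2, half_pos hε, fun s t hs ht hsε htε => ?_⟩
  have htsymm : (unitInterval.symm t : ℝ) ≤ 1 / 2 := by
    rw [unitInterval.coe_symm_eq]
    linarith
  rw [trans_symm_apply γ σ t, Path.trans_apply, Path.trans_apply, dif_pos hs, dif_pos htsymm]
  refine le_of_eq_of_le ?_ (hmid (y := (⟨2 * s, _⟩, ⟨2 * unitInterval.symm t, _⟩)) ?_)
  · simp only [unitInterval.coe_symm_eq, abs_of_nonpos (sub_nonpos.2 (hs.trans ht))]
    ring
  · rw [abs_lt] at hsε htε
    simp only [Prod.dist_eq, Subtype.dist_eq, Real.dist_eq, pt1, unitInterval.coe_symm_eq,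
      max_lt_iff, abs_lt]
    refine ⟨⟨?_, ?_⟩, ?_, ?_⟩ <;> linarith

theorem isLocGeod_trans_symm (hγ : IsGeod (γ : C(I01, X)) L) (hσ : IsGeod (σ : C(I01, X)) L)
    (hmid : ∀ᶠ u : I01 × I01 in 𝓝 (pt1, pt1),
      L * (1 - u.1) + L * (1 - u.2) ≤ dist (γ u.1) (σ u.2)) :
    IsLocGeod (γ.trans σ.symm : C(I01, X)) (2 * L) := by
  refine ⟨mul_nonneg zero_le_two hγ.1, fun t => ?_⟩
  rcases lt_trichotomy (t : ℝ) (1 / 2) with ht | ht | ht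
  · refine ⟨1 / 2 - t, sub_pos.2 ht, fun s s' hs hs' => dist_trans_of_le_half hγ _ ?_ ?_⟩
    · linarith [(abs_lt.1 hs).2]
    · linarith [(abs_lt.1 hs').2]
  · obtain ⟨ε, hε, hmid⟩ := exists_le_dist_trans_symm hmid
    have hacross {s s' : I01} (hs : (s : ℝ) ≤ 1 / 2) (hs' : 1 / 2 ≤ (s' : ℝ))
        (hsε : |(s : ℝ) - 1 / 2| < ε) (hsε' : |(s' : ℝ) - 1 / 2| < ε) :
        dist (γ.trans σ.symm s) (γ.trans σ.symm s') = 2 * L * |(s : ℝ) - s'| :=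
      (dist_trans_symm_le_of_le_half_of_half_le hγ hσ hs hs').antisymm
        (hmid s s' hs hs' hsε hsε')
    refine ⟨ε, hε, fun s s' hsε hsε' => ?_⟩
    rw [ht] at hsε hsε'
    rcases le_total (s : ℝ) (1 / 2) with hs | hs <;> rcases le_total (s' : ℝ) (1 / 2) with hs' | hs'
    · exact dist_trans_of_le_half hγ _ hs hs'
    · exact hacross hs hs' hsε hsε'
    · rw [dist_comm, abs_sub_comm]
      exact hacross hs' hs hsε' hsε
    · exact dist_trans_symm_of_half_le hσ _ hs hs'
  · refine ⟨t - 1 / 2, sub_pos.2 ht, fun s s' hs hs' => dist_trans_symm_of_half_le hσ _ ?_ ?_⟩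
    · linarith [(abs_lt.1 hs).1]
    · linarith [(abs_lt.1 hs').1]

end Concatenation

section Shortcut

variable {p q : X} {γ σ : C(I01, X)}

lemma exists_mem_geodFrom_dist_eq [ProperSpace X] (hgeo : GeodesicSpace X) {M : Set X}
    (hM : IsPreconnected M) (hcut : Disjoint M (Cut p)) {c d : C(I01, X)} {r : ℝ}
    (hc : c ∈ GeodFrom p) (hd : d ∈ GeodFrom p) (hcM : endpt c ∈ M) (hdM : endpt d ∈ M)
    (hcr : dist c γ ≤ r) (hrd : r ≤ dist d γ) :
    ∃ e ∈ GeodFrom p, endpt e ∈ M ∧ dist e γ = r := by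
  obtain ⟨e, ⟨he, heM⟩, her⟩ :=
    (isPreconnected_geodFrom_inter_preimage hgeo hM hcut).intermediate_value ⟨hc, hcM⟩ ⟨hd, hdM⟩
      (continuous_id.dist continuous_const).continuousOn ⟨hcr, hrd⟩
  exact ⟨e, he, heM, her⟩

lemma exists_mem_geodFrom_of_shortcut [ProperSpace X] (hgeo : GeodesicSpace X)
    (hcut : Disjoint (ball p (dist p q)) (Cut p)) (hγ : γ ∈ GeodFrom p) (hσ : σ ∈ GeodFrom p)
    (hγq : endpt γ = q) (hσq : endpt σ = q) {a b : I01} {r η : ℝ}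
    (hab : dist (γ a) (σ b) < dist p q * (1 - a) + dist p q * (1 - b))
    (hγη : dist (γ a) q < η / 2) (hση : dist (σ b) q < η / 2)
    (hγr : dist (initPart γ a) γ ≤ r) (hσr : r ≤ dist (initPart σ b) γ) :
    ∃ c ∈ GeodFrom p, dist (endpt c) q < η ∧ dist c γ = r := by
  obtain ⟨m, L, hm, hm0, hm1⟩ := hgeo (γ a) (σ b)
  have hdist {c : C(I01, X)} (hc : c ∈ GeodFrom p) (hcq : endpt c = q) (t : I01) :
      dist p (c t) = dist p q * t := by
    rw [← hcq, ← (isGeod_of_mem_geodFrom hc).dist_pt0_apply, hc.2]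
  have hmp (t : I01) : dist p (m t) < dist p q := by
    refine hm.dist_lt_of_perimeter_lt ?_ t
    rw [hm0, hm1, dist_comm (σ b), hdist hγ hγq, hdist hσ hσq]
    linarith
  have hmq (t : I01) : dist (m t) q < η := by
    rw [dist_comm]
    refine hm.dist_lt_of_perimeter_lt ?_ t
    rw [hm0, hm1, dist_comm q]
    linarith [dist_triangle_right (γ a) (σ b) q]
  have hmcut : Disjoint (range m) (Cut p) :=
    hcut.mono_left (range_subset_iff.2 fun t => mem_ball'.2 (hmp t))
  obtain ⟨c, hc, ⟨t, hct⟩, hcr⟩ := exists_mem_geodFrom_dist_eq hgeo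
    (isPreconnected_range m.continuous) hmcut (initPart_mem_geodFrom hγ a)
    (initPart_mem_geodFrom hσ b) ⟨pt0, by rw [hm0, endpt_initPart]⟩
    ⟨pt1, by rw [hm1, endpt_initPart]⟩ hγr hσr
  exact ⟨c, hc, hct ▸ hmq t, hcr⟩

theorem conjugateAlong_of_frequently_shortcut [ProperSpace X] (hgeo : GeodesicSpace X)
    (hcut : Disjoint (ball p (dist p q)) (Cut p)) (hγ : γ ∈ GeodFrom p) (hσ : σ ∈ GeodFrom p)
    (hγq : endpt γ = q) (hσq : endpt σ = q) (hne : γ ≠ σ)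
    (hshort : ∃ᶠ u : I01 × I01 in 𝓝 (pt1, pt1),
      dist (γ u.1) (σ u.2) < dist p q * (1 - u.1) + dist p q * (1 - u.2)) :
    ConjugateAlong p γ := by
  by_contra hconj
  have hγloc := geodFrom_subset_locGeodFrom p hγ
  obtain ⟨δ, hδ, hinj⟩ := exists_ball_injOn_of_not_conjugateAlong hγloc hconj
  obtain ⟨r, hr, hrmin⟩ := exists_between (lt_min hδ (dist_pos.2 hne.symm))
  obtain ⟨hrδ, hrσ⟩ := lt_min_iff.1 hrmin
  have hF : IsClosed (endpt '' (GeodFrom p ∩ sphere γ r)) := isClosed_image_endpt p isClosed_sphere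
  have hqF : q ∉ endpt '' (GeodFrom p ∩ sphere γ r) := by
    rintro ⟨c, ⟨hc, hcr⟩, hcq⟩
    obtain rfl : c = γ := hinj ⟨(mem_sphere.1 hcr).trans_lt hrδ, geodFrom_subset_locGeodFrom p hc⟩
      ⟨mem_ball_self hδ, hγloc⟩ (hcq.trans hγq.symm)
    exact hr.ne (by simpa using hcr)
  obtain ⟨η, hη, hηF⟩ := Metric.isOpen_iff.1 hF.isOpen_compl q hqF
  have hγη : ∀ᶠ a in 𝓝 pt1, dist (γ a) q < η / 2 :=
    (γ.continuous.tendsto' pt1 q hγq).eventually (ball_mem_nhds q (half_pos hη))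
  have hση : ∀ᶠ b in 𝓝 pt1, dist (σ b) q < η / 2 :=
    (σ.continuous.tendsto' pt1 q hσq).eventually (ball_mem_nhds q (half_pos hη))
  have hγr : ∀ᶠ a in 𝓝 pt1, dist (initPart γ a) γ < r :=
    tendsto_initPart γ (ball_mem_nhds γ hr)
  have hσr : ∀ᶠ b in 𝓝 pt1, r < dist (initPart σ b) γ :=
    ((tendsto_initPart σ).dist tendsto_const_nhds).eventually_const_lt hrσ
  obtain ⟨⟨a, b⟩, hab, ⟨haη, har⟩, hbη, hbr⟩ :=
    (hshort.and_eventually ((hγη.and hγr).prod_nhds (hση.and hσr))).exists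
  obtain ⟨c, hc, hcq, hcr⟩ := exists_mem_geodFrom_of_shortcut hgeo hcut hγ hσ hγq hσq hab haη hbη
    har.le hbr.le
  exact hηF hcq ⟨c, ⟨hc, hcr⟩, rfl⟩

end Shortcut

theorem isLocGeod_trans_symm_of_not_conjugateAlong [ProperSpace X] (hgeo : GeodesicSpace X)
    {p q : X} {γ σ : Path p q} (hcut : Disjoint (ball p (dist p q)) (Cut p))
    (hγ : (γ : C(I01, X)) ∈ GeodFrom p) (hσ : (σ : C(I01, X)) ∈ GeodFrom p)
    (hne : (γ : C(I01, X)) ≠ σ) (hconj : ¬ ConjugateAlong p (γ : C(I01, X))) :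
    IsLocGeod (γ.trans σ.symm : C(I01, X)) (2 * dist p q) := by
  have hlen {τ : Path p q} (hτ : (τ : C(I01, X)) ∈ GeodFrom p) :
      IsGeod (τ : C(I01, X)) (dist p q) := by
    simpa only [show endpt (τ : C(I01, X)) = q from τ.target] using isGeod_of_mem_geodFrom hτ
  refine isLocGeod_trans_symm (hlen hγ) (hlen hσ) ?_
  by_contra hshort
  refine hconj (conjugateAlong_of_frequently_shortcut hgeo hcut hγ hσ γ.target σ.target hne ?_)
  simpa only [not_eventually, not_le] using! hshort

/-- **Klingenberg Lemma.** Let `X` be a proper geodesic metric space and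
`p ∈ X`. If `q ∈ closure (Cut p)` satisfies `inj p = dist p q > 0`, then either `q` is
conjugate to `p` along some geodesic from `p` to `q`, or there is a local geodesic
`γ : [0,1] → X` from `p` to `p` of length `2 · inj p = 2 · dist p q` with midpoint `q`. -/
theorem klingenberg_lemma {X : Type*} [MetricSpace X] [ProperSpace X]
    (hgeo : GeodesicSpace X) (p q : X) (hq : q ∈ closure (Cut p))
    (hinj : inj p = edist p q) (hpos : 0 < dist p q) :
    (∃ (γ : C(I01, X)) (L : ℝ), IsGeod γ L ∧ γ pt0 = p ∧ γ pt1 = q ∧ ConjugateAlong p γ) ∨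
    (∃ (γ : C(I01, X)) (L : ℝ), IsLocGeod γ L ∧ γ pt0 = p ∧ γ pt1 = p ∧
      L = 2 * dist p q ∧ γ ⟨1 / 2, by norm_num⟩ = q) := by
  refine or_iff_not_imp_left.2 fun hconj => ?_
  have hball : Disjoint (ball p (dist p q)) (Cut p) :=
    disjoint_ball_cut (by rw [hinj, edist_dist])
  have hqcut : q ∈ Cut p := by
    by_contra hqcut
    obtain ⟨γ, L, hγ, hγ0, hγ1⟩ := hgeo p q
    exact hconj ⟨γ, L, hγ, hγ0, hγ1,
      conjugateAlong_of_mem_closure_cut_of_notMem_cut hq hqcut ⟨⟨L, hγ⟩, hγ0⟩ hγ1⟩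
  obtain ⟨γ, σ, Lγ, Lσ, hγ, hσ, hγ0, hγ1, hσ0, hσ1, hne⟩ := hqcut
  let γ' : Path p q := ⟨γ, hγ0, hγ1⟩
  let σ' : Path p q := ⟨σ, hσ0, hσ1⟩
  refine ⟨γ'.trans σ'.symm, 2 * dist p q, ?_, Path.source _, Path.target _, rfl,
    trans_half _ _⟩
  exact isLocGeod_trans_symm_of_not_conjugateAlong hgeo hball ⟨⟨Lγ, hγ⟩, hγ0⟩ ⟨⟨Lσ, hσ⟩, hσ0⟩
    hne fun h => hconj ⟨γ, Lγ, hγ, hγ0, hγ1, h⟩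

end InjSoul
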